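/- There is an absolute constant C > 0 such that, for all positive integers N and N₀, 𝓙(𝓜,Z) ≤ C · ( N²R²T^{−1} + N N₀^{−1} R² + N N₀^{−1} · 𝓙(𝓜,Z₀) ), where 𝓙(𝓜,Z) counts quadruples of length N and 𝓙(𝓜,Z₀) counts quadruples of length N₀. -/

import Mathlib

/-!
The bound holds for each pair `(m₁, m₂)` separately, with `θ = log (m₁ / m₂)`; summing over the
`R²` pairs gives the theorem.

For fixed `θ` one counts lattice points `(x, y) ∈ {1,…,N}²` in the narrow cone
`|log (x / y) + θ| ≤ δ`, `δ = 2π / T`. The points with a given value `s` of `log (x / y)` are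
multiples of one primitive vector `(a, b)`, and if there are `c` of them then `c a, c b ≤ N`
(`exists_primitive`).

* If two values `s < s'` occur, with primitive vectors `(a, b)` and `(a', b')`, the determinant
  `a' b - a b'` is a positive integer, so `s' - s ≥ 1 / (a' b) ≥ c c' / N²` (`ray_gap`). All values
  lie in an interval of length `2δ`, so adding up the gaps between consecutive values bounds the
  number of points by `4 δ N²` (`sum_le_of_gaps`).
* If only one value occurs, all points lie on one ray, and the number of points on a ray scales
  linearly with the side of the box, up to rounding; this gives `(N / N₀) (1 + L(N₀))`, where
  `L(N₀)` is the corresponding count for the box of side `N₀`.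
-/

open scoped Classical

/-- The number of quadruples `(m₁,m₂,n₁,n₂) ∈ 𝓜² × {1,…,N}²` with
`|log(m₁n₁/(m₂n₂))| ≤ 2π/T`. -/
noncomputable def Jcount (T : ℝ) (𝓜 : Finset ℕ) (N : ℕ) : ℕ :=
  (((𝓜 ×ˢ 𝓜) ×ˢ (Finset.Icc 1 N ×ˢ Finset.Icc 1 N)).filter
    (fun p => |Real.log ((p.1.1 * p.2.1 : ℝ) / (p.1.2 * p.2.2 : ℝ))| ≤
      2 * Real.pi / T)).card

/-- The lattice points `(x, y) ∈ {1,…,N}²` in the cone `|log (x / y) + θ| ≤ δ`. -/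
noncomputable def conePoints (θ δ : ℝ) (N : ℕ) : Finset (ℕ × ℕ) :=
  (Finset.Icc 1 N ×ˢ Finset.Icc 1 N).filter
    (fun p => |Real.log ((p.1 : ℝ) / (p.2 : ℝ)) + θ| ≤ δ)

/-- The points of the cone on the ray `log (x / y) = s`. -/
noncomputable def rayPoints (θ δ : ℝ) (N : ℕ) (s : ℝ) : Finset (ℕ × ℕ) :=
  (conePoints θ δ N).filter (fun p => Real.log ((p.1 : ℝ) / (p.2 : ℝ)) = s)

lemma mem_conePoints {θ δ : ℝ} {N : ℕ} {p : ℕ × ℕ} :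
    p ∈ conePoints θ δ N ↔ ((1 ≤ p.1 ∧ p.1 ≤ N) ∧ (1 ≤ p.2 ∧ p.2 ≤ N)) ∧
      |Real.log ((p.1 : ℝ) / (p.2 : ℝ)) + θ| ≤ δ := by
  simp [conePoints]

lemma Jcount_eq_sum (T : ℝ) (𝓜 : Finset ℕ) (h𝓜 : ∀ m ∈ 𝓜, 0 < m) (N : ℕ) :
    Jcount T 𝓜 N = ∑ q ∈ 𝓜 ×ˢ 𝓜,
      (conePoints (Real.log ((q.1 : ℝ) / (q.2 : ℝ))) (2 * Real.pi / T) N).card := by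
  unfold Jcount
  rw [Finset.card_filter, Finset.sum_product]
  refine Finset.sum_congr rfl fun q hq => ?_
  rw [conePoints, Finset.card_filter]
  refine Finset.sum_congr rfl fun p hp => ?_
  simp only [Finset.mem_product, Finset.mem_Icc] at hq hp
  have h1 : (0 : ℝ) < q.1 := by exact_mod_cast h𝓜 _ hq.1
  have h2 : (0 : ℝ) < q.2 := by exact_mod_cast h𝓜 _ hq.2
  have h3 : (0 : ℝ) < p.1 := by exact_mod_cast hp.1.1
  have h4 : (0 : ℝ) < p.2 := by exact_mod_cast hp.2.1
  have : Real.log ((q.1 * p.1 : ℝ) / (q.2 * p.2 : ℝ)) =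
      Real.log ((p.1 : ℝ) / (p.2 : ℝ)) + Real.log ((q.1 : ℝ) / (q.2 : ℝ)) := by
    rw [← Real.log_mul (by positivity) (by positivity)]
    congr 1
    field_simp
  rw [this]

/-- The points on a ray are multiples of a single primitive vector `(a, b)`, so that `c` such
points inside the box of side `N` force `c * max a b ≤ N`. -/
lemma exists_primitive {θ δ : ℝ} {N : ℕ} {s : ℝ} (hs : (rayPoints θ δ N s).Nonempty) :
    ∃ a b : ℕ, 0 < a ∧ 0 < b ∧ Real.log ((a : ℝ) / (b : ℝ)) = s ∧
      (rayPoints θ δ N s).card * max a b ≤ N := by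
  obtain ⟨⟨x, y⟩, hxy⟩ := hs
  simp only [rayPoints, Finset.mem_filter, mem_conePoints] at hxy
  obtain ⟨⟨⟨⟨hx, -⟩, hy, -⟩, -⟩, hlog⟩ := hxy
  obtain ⟨g, a, b, hg, hco, rfl, rfl⟩ := Nat.exists_coprime' (m := x) (n := y)
    (Nat.gcd_pos_of_pos_left _ hx)
  have ha : 0 < a := Nat.pos_of_mul_pos_right hx
  have hb : 0 < b := Nat.pos_of_mul_pos_right hy
  have hab : Real.log ((a : ℝ) / (b : ℝ)) = s := by
    rw [← hlog]
    congr 1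
    push_cast
    have : (g : ℝ) ≠ 0 := by positivity
    field_simp
  refine ⟨a, b, ha, hb, hab, ?_⟩
  have hmul : ∀ p ∈ rayPoints θ δ N s, ∃ j : ℕ, 1 ≤ j ∧ j * max a b ≤ N ∧ p = (j * a, j * b) := by
    rintro ⟨u, v⟩ hp
    simp only [rayPoints, Finset.mem_filter, mem_conePoints] at hp
    obtain ⟨⟨⟨⟨hu, huN⟩, hv, hvN⟩, -⟩, hl⟩ := hp
    have hu' : (0 : ℝ) < u := by exact_mod_cast hu
    have hv' : (0 : ℝ) < v := by exact_mod_cast hv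
    have heq : (u : ℝ) / v = a / b := by
      apply Real.log_injOn_pos (Set.mem_Ioi.2 (by positivity)) (Set.mem_Ioi.2 (by positivity))
      rw [hl, hab]
    have hc : u * b = a * v := by
      rw [div_eq_div_iff (by positivity) (by positivity)] at heq
      exact_mod_cast heq
    obtain ⟨j, rfl⟩ : a ∣ u := hco.dvd_of_dvd_mul_right ⟨v, hc⟩
    have hv2 : v = j * b := by
      apply Nat.eq_of_mul_eq_mul_left ha
      rw [← hc]; ring
    subst hv2
    refine ⟨j, Nat.pos_of_mul_pos_left hu, ?_, by rw [mul_comm]⟩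
    rcases max_choice a b with h | h <;> rw [h]
    · rwa [mul_comm]
    · exact hvN
  have hm : 0 < max a b := lt_max_of_lt_left ha
  have hcard : (rayPoints θ δ N s).card ≤ (Finset.Icc 1 (N / max a b)).card := by
    refine (Finset.card_le_card (t := (Finset.Icc 1 (N / max a b)).image
      fun j => (j * a, j * b)) ?_).trans Finset.card_image_le
    intro p hp
    obtain ⟨j, hj, hjN, rfl⟩ := hmul p hp
    exact Finset.mem_image.2 ⟨j, Finset.mem_Icc.2 ⟨hj, (Nat.le_div_iff_mul_le hm).2 hjN⟩, rfl⟩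
  rw [Nat.card_Icc, Nat.add_sub_cancel] at hcard
  exact (Nat.le_div_iff_mul_le hm).1 hcard

/-- Distinct rays are separated: the determinant of their primitive vectors is a nonzero
integer. -/
lemma ray_gap {θ δ : ℝ} {N : ℕ} {s s' : ℝ} (hs : (rayPoints θ δ N s).Nonempty)
    (hs' : (rayPoints θ δ N s').Nonempty) (hlt : s < s') :
    ((rayPoints θ δ N s).card : ℝ) * (rayPoints θ δ N s').card ≤ (N : ℝ) ^ 2 * (s' - s) := by
  obtain ⟨a, b, ha, hb, hl, hc⟩ := exists_primitive hs
  obtain ⟨a', b', ha', hb', hl', hc'⟩ := exists_primitive hs'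
  set c := (rayPoints θ δ N s).card
  set c' := (rayPoints θ δ N s').card
  have h1 : c * b ≤ N := (Nat.mul_le_mul_left _ (le_max_right _ _)).trans hc
  have h2 : c' * a' ≤ N := (Nat.mul_le_mul_left _ (le_max_left _ _)).trans hc'
  have h3 : ((c : ℝ) * c') * (a' * b) ≤ (N : ℝ) ^ 2 := by
    have := Nat.mul_le_mul h1 h2
    have h : ((c * b * (c' * a') : ℕ) : ℝ) ≤ ((N * N : ℕ) : ℝ) := by exact_mod_cast this
    push_cast at h
    nlinarith [h]
  have ra : (0 : ℝ) < a := by exact_mod_cast ha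
  have rb : (0 : ℝ) < b := by exact_mod_cast hb
  have ra' : (0 : ℝ) < a' := by exact_mod_cast ha'
  have rb' : (0 : ℝ) < b' := by exact_mod_cast hb'
  have hdet : (a : ℝ) * b' + 1 ≤ a' * b := by
    have : (a : ℝ) / b < a' / b' := by
      rw [← Real.log_lt_log_iff (by positivity) (by positivity), hl, hl']
      exact hlt
    rw [div_lt_div_iff₀ rb rb'] at this
    have h : a * b' < a' * b := by exact_mod_cast this
    exact_mod_cast h
  have hgap : 1 / ((a' : ℝ) * b) ≤ s' - s := by
    -- `log t ≤ t - 1` at `t = a b' / (a' b)`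
    have h := Real.log_le_sub_one_of_pos (x := (a : ℝ) * b' / (a' * b)) (by positivity)
    have e : Real.log ((a : ℝ) * b' / (a' * b)) = s - s' := by
      rw [← hl, ← hl', ← Real.log_div (by positivity) (by positivity)]
      congr 1
      field_simp
    have e2 : (a : ℝ) * b' / (a' * b) ≤ 1 - 1 / (a' * b) := by
      rw [le_sub_iff_add_le, ← add_div]
      exact (div_le_one (by positivity)).2 hdet
    linarith
  rw [div_le_iff₀ (by positivity)] at hgap
  have hpos : 0 ≤ s' - s := by linarith
  calc (c : ℝ) * c' ≤ (c * c') * ((s' - s) * (a' * b)) :=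
        le_mul_of_one_le_right (by positivity) hgap
    _ = ((c * c') * (a' * b)) * (s' - s) := by ring
    _ ≤ _ := by gcongr

/-- If each weight is at most `K` times the distance to every later point, the weights of the
points in `[lo, x)` telescope to at most `K (x - lo)`. -/
lemma sum_le_of_gaps (c : ℝ → ℝ) (K lo : ℝ) (hK : 0 ≤ K) (S : Finset ℝ) :
    ∀ x, lo ≤ x → (∀ s ∈ S, lo ≤ s) → (∀ s ∈ S, c s ≤ K * (x - s)) →
      (∀ s ∈ S, ∀ s' ∈ S, s < s' → c s ≤ K * (s' - s)) →
      ∑ s ∈ S, c s ≤ K * (x - lo) := by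
  induction S using Finset.induction_on_max with
  | empty =>
    intro x hx _ _ _
    simpa using mul_nonneg hK (sub_nonneg.2 hx)
  | insert a S ha ih =>
    intro x hx hlo hxS hp
    rw [Finset.sum_insert fun h => lt_irrefl _ (ha a h)]
    have h1 := ih a (hlo a (Finset.mem_insert_self _ _))
      (fun s hs => hlo s (Finset.mem_insert_of_mem hs))
      (fun s hs => hp s (Finset.mem_insert_of_mem hs) a (Finset.mem_insert_self _ _) (ha s hs))
      (fun s hs s' hs' => hp s (Finset.mem_insert_of_mem hs) s' (Finset.mem_insert_of_mem hs'))
    have h2 := hxS a (Finset.mem_insert_self _ _)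
    linarith

/-- The points of a ray scale linearly with the side of the box, up to rounding. -/
lemma ray_card_le {θ δ : ℝ} {N : ℕ} (N₀ : ℕ) {s : ℝ} (hs : (rayPoints θ δ N s).Nonempty) :
    (rayPoints θ δ N s).card * N₀ ≤ N * (1 + (conePoints θ δ N₀).card) := by
  obtain ⟨a, b, ha, hb, hl, hc⟩ := exists_primitive hs
  have hδ : |s + θ| ≤ δ := by
    obtain ⟨p, hp⟩ := hs
    simp only [rayPoints, Finset.mem_filter, mem_conePoints] at hp
    rw [← hp.2]; exact hp.1.2
  have hm : 0 < max a b := lt_max_of_lt_left ha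
  have hq : N₀ / max a b ≤ (conePoints θ δ N₀).card := by
    have : (Finset.Icc 1 (N₀ / max a b)).card ≤ (conePoints θ δ N₀).card := by
      refine Finset.card_le_card_of_injOn (fun j => (j * a, j * b)) ?_ ?_
      · intro j hj
        simp only [Finset.coe_Icc, Set.mem_Icc, Nat.le_div_iff_mul_le hm] at hj
        have hj0 : (j : ℝ) ≠ 0 := by
          have := hj.1
          positivity
        have e : Real.log (((j * a : ℕ) : ℝ) / ((j * b : ℕ) : ℝ)) = s := by
          rw [← hl]
          push_cast
          rw [mul_div_mul_left _ _ hj0]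
        rw [Finset.mem_coe, mem_conePoints]
        refine ⟨⟨⟨Nat.mul_pos hj.1 ha, ?_⟩, Nat.mul_pos hj.1 hb, ?_⟩, ?_⟩
        · exact (Nat.mul_le_mul_left _ (le_max_left _ _)).trans hj.2
        · exact (Nat.mul_le_mul_left _ (le_max_right _ _)).trans hj.2
        · rw [e]; exact hδ
      · intro i _ j _ h
        exact Nat.eq_of_mul_eq_mul_right ha (Prod.mk.inj h).1
    simpa using this
  have hlt : N₀ ≤ max a b * (1 + (conePoints θ δ N₀).card) := by
    have h := Nat.lt_mul_div_succ N₀ hm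
    exact h.le.trans (Nat.mul_le_mul_left _ (by omega))
  calc (rayPoints θ δ N s).card * N₀
      ≤ (rayPoints θ δ N s).card * (max a b * (1 + (conePoints θ δ N₀).card)) :=
        Nat.mul_le_mul_left _ hlt
    _ = (rayPoints θ δ N s).card * max a b * (1 + (conePoints θ δ N₀).card) := by ring
    _ ≤ _ := Nat.mul_le_mul_right _ hc

/-- The estimate for a single pair `(m₁, m₂)`. -/
lemma cone_card_le (θ δ : ℝ) (hδ : 0 ≤ δ) (N N₀ : ℕ) (hN₀ : 0 < N₀) :
    ((conePoints θ δ N).card : ℝ) ≤ 4 * δ * (N : ℝ) ^ 2 + (N : ℝ) * (N₀ : ℝ)⁻¹ +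
      (N : ℝ) * (N₀ : ℝ)⁻¹ * ((conePoints θ δ N₀).card : ℝ) := by
  set f : ℕ × ℕ → ℝ := fun p => Real.log ((p.1 : ℝ) / (p.2 : ℝ)) with hf
  set S := (conePoints θ δ N).image f with hS
  have hsum : ((conePoints θ δ N).card : ℝ) = ∑ s ∈ S, ((rayPoints θ δ N s).card : ℝ) := by
    rw [Finset.card_eq_sum_card_image f]
    push_cast
    rfl
  have hne : ∀ s ∈ S, (rayPoints θ δ N s).Nonempty := by
    intro s hs
    obtain ⟨p, hp, hps⟩ := Finset.mem_image.1 hs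
    exact ⟨p, Finset.mem_filter.2 ⟨hp, hps⟩⟩
  have hrange : ∀ s ∈ S, -θ - δ ≤ s ∧ s ≤ -θ + δ := by
    intro s hs
    obtain ⟨p, hp, rfl⟩ := Finset.mem_image.1 hs
    have h := abs_le.1 (mem_conePoints.1 hp).2
    simp only [hf]
    constructor <;> linarith [h.1, h.2]
  have hone : ∀ s ∈ S, (1 : ℝ) ≤ (rayPoints θ δ N s).card := fun s hs => by
    exact_mod_cast (hne s hs).card_pos
  have hgap : ∀ s ∈ S, ∀ s' ∈ S, s < s' →
      ((rayPoints θ δ N s).card : ℝ) ≤ (N : ℝ) ^ 2 * (s' - s) ∧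
      ((rayPoints θ δ N s').card : ℝ) ≤ (N : ℝ) ^ 2 * (s' - s) := by
    intro s hs s' hs' hlt
    have h := ray_gap (hne s hs) (hne s' hs') hlt
    have h1 := hone s hs
    have h2 := hone s' hs'
    constructor <;> nlinarith
  rcases S.eq_empty_or_nonempty with hE | hE
  · rw [hsum, hE, Finset.sum_empty]
    positivity
  set M := S.max' hE with hM
  have hMS : M ∈ S := S.max'_mem hE
  by_cases hex : ∃ s ∈ S, s ≠ M
  · obtain ⟨t, ht, htM⟩ := hex
    have hlt : ∀ s ∈ S.erase M, s < M := fun s hs =>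
      lt_of_le_of_ne (S.le_max' s (Finset.mem_of_mem_erase hs)) (Finset.ne_of_mem_erase hs)
    have hA := sum_le_of_gaps (fun s => ((rayPoints θ δ N s).card : ℝ)) ((N : ℝ) ^ 2) (-θ - δ)
      (by positivity) (S.erase M) M (hrange M hMS).1
      (fun s hs => (hrange s (Finset.mem_of_mem_erase hs)).1)
      (fun s hs => (hgap s (Finset.mem_of_mem_erase hs) M hMS (hlt s hs)).1)
      (fun s hs s' hs' h =>
        (hgap s (Finset.mem_of_mem_erase hs) s' (Finset.mem_of_mem_erase hs') h).1)
    have hB := (hgap t ht M hMS (hlt t (Finset.mem_erase.2 ⟨htM, ht⟩))).2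
    have hC : (N : ℝ) ^ 2 * (M - (-θ - δ)) ≤ (N : ℝ) ^ 2 * (2 * δ) := by
      have := (hrange M hMS).2
      gcongr; linarith
    have hD : (N : ℝ) ^ 2 * (M - t) ≤ (N : ℝ) ^ 2 * (2 * δ) := by
      have := (hrange M hMS).2
      have := (hrange t ht).1
      gcongr; linarith
    have hpos : 0 ≤ (N : ℝ) * (N₀ : ℝ)⁻¹ := by positivity
    have hpos' : 0 ≤ (N : ℝ) * (N₀ : ℝ)⁻¹ * ((conePoints θ δ N₀).card : ℝ) := by positivity
    rw [hsum, ← Finset.sum_erase_add S _ hMS]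
    linarith
  · push Not at hex
    have hSM : S = {M} := Finset.eq_singleton_iff_unique_mem.2 ⟨hMS, hex⟩
    have h := ray_card_le N₀ (hne M hMS)
    have h' : ((rayPoints θ δ N M).card : ℝ) * N₀ ≤ N * (1 + (conePoints θ δ N₀).card) := by
      exact_mod_cast h
    have hN₀' : (0 : ℝ) < N₀ := by exact_mod_cast hN₀
    rw [hsum, hSM, Finset.sum_singleton]
    rw [← le_div_iff₀ hN₀'] at h'
    have e : (N : ℝ) * (1 + (conePoints θ δ N₀).card) / N₀ = (N : ℝ) * (N₀ : ℝ)⁻¹ +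
      (N : ℝ) * (N₀ : ℝ)⁻¹ * ((conePoints θ δ N₀).card : ℝ) := by
      ring
    have : 0 ≤ 4 * δ * (N : ℝ) ^ 2 := by positivity
    linarith

/-- Lemma 8 of Heath-Brown, "The Differences Between Consecutive Smooth Numbers":
there is an absolute constant `C > 0` such that for all positive integers `N, N₀`,
`𝓙(𝓜,Z) ≤ C (N²R²T⁻¹ + N N₀⁻¹ R² + N N₀⁻¹ 𝓙(𝓜,Z₀))`, where `𝓙(𝓜,Z)` counts
quadruples of length `N`, and `𝓙(𝓜,Z₀)` quadruples of length `N₀`. -/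
theorem Jcount_reduction :
    ∃ C : ℝ, 0 < C ∧
      ∀ T : ℝ, 20 ≤ T →
      ∀ 𝓜 : Finset ℕ, (∀ m ∈ 𝓜, 0 < m ∧ (m : ℝ) ≤ T) →
      ∀ N N₀ : ℕ, 0 < N → 0 < N₀ →
        (Jcount T 𝓜 N : ℝ) ≤
          C * ((N : ℝ) ^ 2 * (𝓜.card : ℝ) ^ 2 * T⁻¹ +
            (N : ℝ) * (N₀ : ℝ)⁻¹ * (𝓜.card : ℝ) ^ 2 +
            (N : ℝ) * (N₀ : ℝ)⁻¹ * (Jcount T 𝓜 N₀ : ℝ)) := by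
  refine ⟨8 * Real.pi, by positivity, ?_⟩
  intro T hT 𝓜 h𝓜 N N₀ _ hN₀
  have hT0 : 0 < T := by linarith
  rw [Jcount_eq_sum T 𝓜 (fun m hm => (h𝓜 m hm).1) N,
    Jcount_eq_sum T 𝓜 (fun m hm => (h𝓜 m hm).1) N₀]
  push_cast
  set B := ∑ q ∈ 𝓜 ×ˢ 𝓜,
    ((conePoints (Real.log ((q.1 : ℝ) / (q.2 : ℝ))) (2 * Real.pi / T) N₀).card : ℝ) with hB
  have hB0 : 0 ≤ B := Finset.sum_nonneg fun _ _ => by positivity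
  have hle := Finset.sum_le_sum fun (q : ℕ × ℕ) (_ : q ∈ 𝓜 ×ˢ 𝓜) =>
    cone_card_le (Real.log ((q.1 : ℝ) / (q.2 : ℝ))) (2 * Real.pi / T) (by positivity) N N₀ hN₀
  rw [Finset.sum_add_distrib, ← Finset.mul_sum, Finset.sum_const, Finset.card_product,
    nsmul_eq_mul, ← hB] at hle
  push_cast at hle
  refine hle.trans ?_
  clear_value B
  clear hle
  have h1 : (1 : ℝ) ≤ 8 * Real.pi := by linarith [Real.pi_gt_three]
  have hX : 0 ≤ (N : ℝ) * (N₀ : ℝ)⁻¹ * (𝓜.card : ℝ) ^ 2 := by positivity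
  have hY : 0 ≤ (N : ℝ) * (N₀ : ℝ)⁻¹ * B := mul_nonneg (by positivity) hB0
  have hX' := le_mul_of_one_le_left hX h1
  have hY' := le_mul_of_one_le_left hY h1
  have e : (𝓜.card : ℝ) * 𝓜.card * (4 * (2 * Real.pi / T) * (N : ℝ) ^ 2 + (N : ℝ) * (N₀ : ℝ)⁻¹) =
      8 * Real.pi * ((N : ℝ) ^ 2 * (𝓜.card : ℝ) ^ 2 * T⁻¹) +
        (N : ℝ) * (N₀ : ℝ)⁻¹ * (𝓜.card : ℝ) ^ 2 := by
    rw [div_eq_mul_inv]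
    ring
  rw [e]
  linarith
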